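/- arXiv:2208.00794 — 2 statements merged into one kernel-verified Lean document; each statement's English description precedes it below -/
import Mathlib

section
/- Let r ≥ 2 be an integer and P = (m, 𝓔) an r-pattern. If the r-graph G is a P-construction, then λ(G) ≤ λ(P). -/
/-!
Let `φ : V → [m]` assign each vertex to its part, and let `x` be a weighting of `V` in the simplex.
Push `x` forward: `y i = ∑_{φ v = i} x v`, a point of the simplex on `[m]`. Then
`λ_G(x) ≤ λ_𝓔(y)`, which gives the claim on taking suprema.

The edges of `G` are grouped by their profile `e ∈ 𝓔`. An edge with profile `e` is determined by
its intersections with the fibres of `φ`, the `i`-th being an `e(i)`-subset of the fibre over `i`.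
Hence the edges of profile `e` contribute at most `∏ i, esymm_{e(i)} (x on the fibre over i)`
(`sum_prod_profile_le`), and each factor is at most `y i ^ e(i) / e(i)!`, because a squarefree
monomial of degree `k` occurs with coefficient `k!` in the expansion of `(∑ x) ^ k`
(`sum_powersetCard_prod_le`).
-/

open Filter Topology

noncomputable section

/-- The Lagrange polynomial `λ_𝓔` of a family `E` of `r`-multisets on the index type `ι`:
`λ_𝓔(x) = r! · ∑_{E ∈ 𝓔} ∏_i x_i^{E(i)} / E(i)!`. -/
def lagrangePoly {ι : Type} [Fintype ι] [DecidableEq ι]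
    (r : ℕ) (E : Finset (Multiset ι)) (x : ι → ℝ) : ℝ :=
  (Nat.factorial r : ℝ) *
    ∑ e ∈ E, ∏ i, x i ^ (Multiset.count i e) / ((Multiset.count i e).factorial : ℝ)

/-- The Lagrangian `λ(P)` of a pattern `P = (ι, E)`: the maximum of the Lagrange polynomial
over the standard simplex. -/
def patternLagrangian {ι : Type} [Fintype ι] [DecidableEq ι]
    (r : ℕ) (E : Finset (Multiset ι)) : ℝ :=
  sSup (lagrangePoly r E '' stdSimplex ℝ ι)

/-- The family `𝓔[S]` of the induced subpattern `P[S]`, consisting of those multisets of `E`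
all of whose elements lie in `S`, relabelled as multisets on the subtype `{i // i ∈ S}`. -/
def subFamily {ι : Type} [DecidableEq ι] (E : Finset (Multiset ι)) (S : Finset ι) :
    Finset (Multiset {i : ι // i ∈ S}) := by
  classical
  exact (E.filter (fun e => ∀ i ∈ e, i ∈ S)).image
    (fun e => Multiset.filterMap
      (fun i => if h : i ∈ S then some (⟨i, h⟩ : {i : ι // i ∈ S}) else none) e)

/-- A pattern is minimal if removing any index strictly decreases the Lagrangian.
(`P - i` is exactly the induced subpattern on `univ.erase i`.) -/
def IsMinimalPattern {ι : Type} [Fintype ι] [DecidableEq ι] (r : ℕ)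
    (E : Finset (Multiset ι)) : Prop :=
  ∀ i : ι, patternLagrangian r (subFamily E (Finset.univ.erase i)) < patternLagrangian r E

/-- Index set of the union `P₁ ⊕_i P₂`: index `i` of `ι₁` is replaced by a copy of `ι₂`. -/
abbrev unionIndex (ι₁ ι₂ : Type) (i : ι₁) : Type := {j : ι₁ // j ≠ i} ⊕ ι₂

/-- Projection of the union index set back to `ι₁` (collapsing the copy of `ι₂` to `i`). -/
def unionProj {ι₁ ι₂ : Type} (i : ι₁) : unionIndex ι₁ ι₂ i → ι₁ :=
  Sum.elim (fun j => j.1) (fun _ => i)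

/-- The family `𝓔̂` of the union `P₁ ⊕_i P₂`: an `r`-multiset on the new index set belongs to
`𝓔̂` iff its projection to `ι₁` belongs to `E₁` (cases (b),(c)), or it is a copy of a member
of `E₂` lying inside the copy of `ι₂` (case (a)). -/
def unionFamily {ι₁ ι₂ : Type} [Fintype ι₁] [Fintype ι₂] [DecidableEq ι₁] [DecidableEq ι₂]
    (r : ℕ) (E₁ : Finset (Multiset ι₁)) (E₂ : Finset (Multiset ι₂)) (i : ι₁) :
    Finset (Multiset (unionIndex ι₁ ι₂ i)) := by
  classical
  exact Finset.image (fun R : Sym (unionIndex ι₁ ι₂ i) r => (R : Multiset (unionIndex ι₁ ι₂ i)))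
    ((Finset.univ.sym r).filter
      (fun R : Sym (unionIndex ι₁ ι₂ i) r =>
        Multiset.map (unionProj i) (R : Multiset (unionIndex ι₁ ι₂ i)) ∈ E₁ ∨
        ∃ e ∈ E₂, (R : Multiset (unionIndex ι₁ ι₂ i)) = Multiset.map Sum.inr e))

/-- Index set of the union `P₁ ⊕_T P₂`: each index of `T` is replaced by a copy of `ι₂`. -/
abbrev unionIndexT (ι₁ ι₂ : Type) (T : Finset ι₁) : Type :=
  {j : ι₁ // j ∉ T} ⊕ ({j : ι₁ // j ∈ T} × ι₂)

/-- Projection of the union index set back to `ι₁`. -/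
def unionProjT {ι₁ ι₂ : Type} (T : Finset ι₁) : unionIndexT ι₁ ι₂ T → ι₁ :=
  Sum.elim (fun j => j.1) (fun p => p.1.1)

/-- The family `𝓔̂` of the union `P₁ ⊕_T P₂`. -/
def unionFamilyT {ι₁ ι₂ : Type} [Fintype ι₁] [Fintype ι₂] [DecidableEq ι₁] [DecidableEq ι₂]
    (r : ℕ) (E₁ : Finset (Multiset ι₁)) (E₂ : Finset (Multiset ι₂)) (T : Finset ι₁) :
    Finset (Multiset (unionIndexT ι₁ ι₂ T)) := by
  classical
  exact Finset.image (fun R : Sym (unionIndexT ι₁ ι₂ T) r => (R : Multiset (unionIndexT ι₁ ι₂ T)))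
    ((Finset.univ.sym r).filter
      (fun R : Sym (unionIndexT ι₁ ι₂ T) r =>
        Multiset.map (unionProjT T) (R : Multiset (unionIndexT ι₁ ι₂ T)) ∈ E₁ ∨
        ∃ i : {j : ι₁ // j ∈ T}, ∃ e ∈ E₂,
          (R : Multiset (unionIndexT ι₁ ι₂ T)) = Multiset.map (fun k => Sum.inr (i, k)) e))

/-- The pattern `P_G` associated with an `r`-graph `G`: its multisets are the edges of `G`. -/
def graphPattern {V : Type} [DecidableEq V] (G : Finset (Finset V)) : Finset (Multiset V) :=
  G.image Finset.val

/-- The Lagrangian `λ(G)` of an `r`-graph `G`. -/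
def graphLagrangian {V : Type} [Fintype V] [DecidableEq V] (r : ℕ) (G : Finset (Finset V)) : ℝ :=
  patternLagrangian r (graphPattern G)

/-- `α` is a jump for `r`. -/
def IsJump (r : ℕ) (α : ℝ) : Prop :=
  ∃ c : ℝ, 0 < c ∧ ∀ ε : ℝ, 0 < ε → ∀ m : ℕ, r ≤ m → ∃ n₀ : ℕ, ∀ n : ℕ, n₀ ≤ n →
    ∀ G : Finset (Finset (Fin n)), (∀ e ∈ G, e.card = r) →
      α + ε ≤ (G.card : ℝ) / (n.choose r : ℝ) →
      ∃ W : Finset (Fin n), W.card = m ∧ ∃ H ⊆ G, (∀ e ∈ H, e ⊆ W) ∧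
        α + c ≤ (H.card : ℝ) / (m.choose r : ℝ)

/-- `G` contains a copy of `F` as a subgraph. -/
def GraphContains {n k : ℕ} (G : Finset (Finset (Fin n))) (F : Finset (Finset (Fin k))) : Prop :=
  ∃ φ : Fin k → Fin n, Function.Injective φ ∧ ∀ e ∈ F, e.image φ ∈ G

/-- The Turán number `ex(n, 𝓕)` for a family `𝓕` of graphs, among `r`-uniform hosts. -/
def exNum (r n : ℕ) (𝓕 : Set (Σ k : ℕ, Finset (Finset (Fin k)))) : ℕ :=
  sSup {c : ℕ | ∃ G : Finset (Finset (Fin n)), (∀ e ∈ G, e.card = r) ∧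
    (∀ F ∈ 𝓕, ¬ GraphContains G F.2) ∧ G.card = c}

/-- `Π_∞^{(r)}`: the set of Turán densities of (possibly infinite) families of `r`-graphs. -/
def turanDensitySet (r : ℕ) : Set ℝ :=
  {x | ∃ 𝓕 : Set (Σ k : ℕ, Finset (Finset (Fin k))),
    (∀ F ∈ 𝓕, ∀ e ∈ F.2, e.card = r) ∧
    Tendsto (fun n => (exNum r n 𝓕 : ℝ) / (n.choose r : ℝ)) atTop (nhds x)}

/-- `Λ^{(r)}`: the set of Lagrangians of `r`-graphs. -/
def lambdaSet (r : ℕ) : Set ℝ :=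
  {x | ∃ (n : ℕ) (G : Finset (Finset (Fin n))), (∀ e ∈ G, e.card = r) ∧ graphLagrangian r G = x}

/-- The tail `(P_t)_{t ≥ t₀}` of a sequence of patterns is a `(k, l)`-sequence. -/
def IsKLambdaSeqFrom (r k t₀ : ℕ) (l : ℝ) (ι : ℕ → Type)
    [∀ t, Fintype (ι t)] [∀ t, DecidableEq (ι t)]
    (𝓔 : ∀ t, Finset (Multiset (ι t))) : Prop :=
  ∃ ε : ℕ → ℝ,
    (∀ t, t₀ ≤ t → 0 < ε t) ∧
    Tendsto (fun t => patternLagrangian r (𝓔 t)) atTop (nhds l) ∧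
    (∀ t, t₀ ≤ t → l + ε t ≤ patternLagrangian r (𝓔 t)) ∧
    (∀ t, t₀ ≤ t → ∀ S : Finset (ι t), S.card = k →
      patternLagrangian r (subFamily (𝓔 t) S) ≤ l)

/-- A `(k, l)`-sequence of patterns. -/
def IsKLambdaSeq (r k : ℕ) (l : ℝ) (ι : ℕ → Type)
    [∀ t, Fintype (ι t)] [∀ t, DecidableEq (ι t)]
    (𝓔 : ∀ t, Finset (Multiset (ι t))) : Prop :=
  IsKLambdaSeqFrom r k 0 l ι 𝓔

/-- A non-jump sequence of patterns on `l`: for every `k > 0` some tail is a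
`(k, l)`-sequence. -/
def IsNonJumpSeq (r : ℕ) (l : ℝ) (ι : ℕ → Type)
    [∀ t, Fintype (ι t)] [∀ t, DecidableEq (ι t)]
    (𝓔 : ∀ t, Finset (Multiset (ι t))) : Prop :=
  ∀ k : ℕ, 0 < k → ∃ t₀ : ℕ, IsKLambdaSeqFrom r k t₀ l ι 𝓔

/-- The family of all `r`-multisets on `Fin m` except the `m` constant ones. -/
def allButConstant (m r : ℕ) : Finset (Multiset (Fin m)) := by
  classical
  exact ((Finset.univ.sym r).image (fun s : Sym (Fin m) r => (s : Multiset (Fin m)))).filter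
    (fun e => ¬ ∃ i : Fin m, e = Multiset.replicate r i)

end

/-- The `k`-th elementary symmetric function of nonnegative reals is at most `(∑ x) ^ k / k!`. -/
lemma sum_powersetCard_prod_le {V : Type} [DecidableEq V] (x : V → ℝ) (hx : ∀ v, 0 ≤ x v)
    (s : Finset V) (k : ℕ) :
    ∑ t ∈ s.powersetCard k, ∏ v ∈ t, x v ≤ (∑ v ∈ s, x v) ^ k / (k.factorial : ℝ) := by
  induction s using Finset.induction_on generalizing k with
  | empty =>
    cases k with
    | zero => simp
    | succ k => simp [Finset.powersetCard_eq_empty.2 (show (∅ : Finset V).card < k + 1 by simp)]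
  | insert a s ha ih =>
    cases k with
    | zero => simp
    | succ k =>
      have hdisj : Disjoint (s.powersetCard (k + 1)) ((s.powersetCard k).image (insert a)) := by
        rw [Finset.disjoint_left]
        intro t ht ht'
        obtain ⟨u, -, rfl⟩ := Finset.mem_image.1 ht'
        exact ha ((Finset.mem_powersetCard.1 ht).1 (Finset.mem_insert_self a u))
      have hnot : ∀ t ∈ s.powersetCard k, a ∉ t :=
        fun t ht hat => ha ((Finset.mem_powersetCard.1 ht).1 hat)
      have himg : ∑ t ∈ (s.powersetCard k).image (insert a), ∏ v ∈ t, x v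
          = x a * ∑ t ∈ s.powersetCard k, ∏ v ∈ t, x v := by
        rw [Finset.sum_image, Finset.mul_sum]
        · exact Finset.sum_congr rfl fun t ht => Finset.prod_insert (hnot t ht)
        · intro t ht u hu htu
          have h : (insert a t).erase a = (insert a u).erase a := congrArg (·.erase a) htu
          rwa [Finset.erase_insert (hnot t ht), Finset.erase_insert (hnot u hu)] at h
      rw [Finset.powersetCard_succ_insert ha, Finset.sum_union hdisj, himg, Finset.sum_insert ha]
      have hs : 0 ≤ ∑ v ∈ s, x v := Finset.sum_nonneg fun v _ => hx v
      -- Bernoulli: `S ^ (k + 1) + (k + 1) * S ^ k * x a ≤ (S + x a) ^ (k + 1)`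
      have hB := pow_add_mul_le_add_pow (a := ∑ v ∈ s, x v) (b := x a) hs
        (by linarith [hx a]) (k + 1)
      have h1 := ih (k + 1)
      have h2 := mul_le_mul_of_nonneg_left (ih k) (hx a)
      refine (add_le_add h1 h2).trans ?_
      have hk : (0 : ℝ) < k.factorial := by positivity
      rw [Nat.factorial_succ, Nat.cast_mul, add_comm (x a)]
      simp only [Nat.add_sub_cancel] at hB
      rw [show (∑ v ∈ s, x v) ^ (k + 1) / (((k + 1 : ℕ) : ℝ) * k.factorial)
          + x a * ((∑ v ∈ s, x v) ^ k / k.factorial)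
          = ((∑ v ∈ s, x v) ^ (k + 1) + ((k + 1 : ℕ) : ℝ) * (∑ v ∈ s, x v) ^ k * x a)
            / (((k + 1 : ℕ) : ℝ) * k.factorial) by field_simp]
      gcongr

/-- The vertex sets of profile `e` contribute at most the monomial of `e` evaluated at the
pushforward of `x` along `φ`. -/
lemma sum_prod_profile_le {V : Type} [Fintype V] [DecidableEq V] {ι : Type} [Fintype ι]
    [DecidableEq ι] (φ : V → ι) (x : V → ℝ) (hx : ∀ v, 0 ≤ x v) (e : Multiset ι) :
    ∑ s : Finset V with Multiset.map φ s.val = e, ∏ v ∈ s, x v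
      ≤ ∏ i, (∑ v with φ v = i, x v) ^ (Multiset.count i e)
          / ((Multiset.count i e).factorial : ℝ) := by
  have hcount : ∀ (s : Finset V) (i : ι),
      (s.filter (fun v => φ v = i)).card = Multiset.count i (Multiset.map φ s.val) := by
    intro s i
    rw [Multiset.count_map, Finset.card_def, Finset.filter_val]
    simp only [eq_comm]
  calc ∑ s : Finset V with Multiset.map φ s.val = e, ∏ v ∈ s, x v
      = ∑ s : Finset V with Multiset.map φ s.val = e, ∏ i, ∏ v ∈ s with φ v = i, x v :=
        Finset.sum_congr rfl fun s _ => (Finset.prod_fiberwise s φ x).symm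
    _ = ∑ p ∈ (Finset.univ.filter (fun s : Finset V => Multiset.map φ s.val = e)).image
          (fun s i => s.filter (fun v => φ v = i)), ∏ i, ∏ v ∈ p i, x v := by
        rw [Finset.sum_image]
        -- a set is recovered from its intersections with the fibres of `φ`
        intro s _ t _ hst
        ext v
        have h := congrArg (v ∈ ·) (congrFun hst (φ v))
        simpa using h
    _ ≤ ∑ p ∈ Fintype.piFinset
          (fun i => (Finset.univ.filter (fun v => φ v = i)).powersetCard (Multiset.count i e)),
          ∏ i, ∏ v ∈ p i, x v := by
        apply Finset.sum_le_sum_of_subset_of_nonneg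
        · intro p hp
          obtain ⟨s, hs, rfl⟩ := Finset.mem_image.1 hp
          have hs' := (Finset.mem_filter.1 hs).2
          refine Fintype.mem_piFinset.2 fun i => Finset.mem_powersetCard.2 ⟨?_, ?_⟩
          · exact Finset.filter_subset_filter _ (Finset.subset_univ s)
          · rw [hcount, hs']
        · exact fun p _ _ => Finset.prod_nonneg fun i _ => Finset.prod_nonneg fun v _ => hx v
    _ = ∏ i, ∑ t ∈ (Finset.univ.filter (fun v => φ v = i)).powersetCard (Multiset.count i e),
          ∏ v ∈ t, x v := by
        rw [Finset.prod_univ_sum]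
    _ ≤ _ := Finset.prod_le_prod
        (fun i _ => Finset.sum_nonneg fun t _ => Finset.prod_nonneg fun v _ => hx v)
        (fun i _ => sum_powersetCard_prod_le x hx _ _)

lemma lagrangePoly_graphPattern {V : Type} [Fintype V] [DecidableEq V] (r : ℕ)
    (G : Finset (Finset V)) (x : V → ℝ) :
    lagrangePoly r (graphPattern G) x = (r.factorial : ℝ) * ∑ s ∈ G, ∏ v ∈ s, x v := by
  unfold lagrangePoly graphPattern
  rw [Finset.sum_image Finset.val_injective.injOn]
  congr 1
  refine Finset.sum_congr rfl fun s _ => ?_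
  rw [← Finset.prod_subset (Finset.subset_univ s)]
  · refine Finset.prod_congr rfl fun v hv => ?_
    rw [Multiset.count_eq_one_of_mem s.nodup hv]
    simp
  · intro v _ hv
    rw [Multiset.count_eq_zero_of_notMem hv]
    simp

lemma lagrangePoly_nonneg {ι : Type} [Fintype ι] [DecidableEq ι] (r : ℕ)
    (E : Finset (Multiset ι)) {x : ι → ℝ} (hx : ∀ i, 0 ≤ x i) : 0 ≤ lagrangePoly r E x := by
  refine mul_nonneg (by positivity) (Finset.sum_nonneg fun e _ => Finset.prod_nonneg fun i _ => ?_)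
  have := hx i
  positivity

lemma bddAbove_lagrangePoly_image {ι : Type} [Fintype ι] [DecidableEq ι] (r : ℕ)
    (E : Finset (Multiset ι)) : BddAbove (lagrangePoly r E '' stdSimplex ℝ ι) := by
  refine ((isCompact_stdSimplex ℝ ι).image ?_).bddAbove
  unfold lagrangePoly
  fun_prop

/-- If the `r`-graph `G` is a `P`-construction (a blowup of `𝓔` given by some
assignment `φ` of vertices to parts), then `λ(G) ≤ λ(P)`. -/
theorem construction_lagrangian_le (r m : ℕ) (hr : 2 ≤ r) (hm : 0 < m)
    (E : Finset (Multiset (Fin m))) (hE : ∀ e ∈ E, Multiset.card e = r)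
    {V : Type} [Fintype V] [DecidableEq V] (G : Finset (Finset V))
    (hG : ∃ φ : V → Fin m,
      G = Finset.univ.filter (fun e : Finset V => Multiset.map φ e.val ∈ E)) :
    graphLagrangian r G ≤ patternLagrangian r E := by
  obtain ⟨φ, rfl⟩ := hG
  unfold graphLagrangian
  -- nonnegativity of the right side covers `V` empty, where the supremum on the left is `sSup ∅ = 0`
  refine Real.sSup_le ?_ (Real.sSup_nonneg ?_)
  · rintro _ ⟨x, hx, rfl⟩
    have hy : (fun i => ∑ v with φ v = i, x v) ∈ stdSimplex ℝ (Fin m) :=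
      ⟨fun i => Finset.sum_nonneg fun v _ => hx.1 v,
        (Finset.sum_fiberwise Finset.univ φ x).trans hx.2⟩
    refine le_trans ?_ (le_csSup (bddAbove_lagrangePoly_image r E) ⟨_, hy, rfl⟩)
    rw [lagrangePoly_graphPattern]
    unfold lagrangePoly
    refine mul_le_mul_of_nonneg_left ?_ (by positivity)
    rw [← Finset.sum_fiberwise_of_maps_to (t := E) (g := fun s : Finset V => Multiset.map φ s.val)
      (fun s hs => (Finset.mem_filter.1 hs).2)]
    refine Finset.sum_le_sum fun e _ => le_trans ?_ (sum_prod_profile_le φ x hx.1 e)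
    refine Finset.sum_le_sum_of_subset_of_nonneg
      (Finset.filter_subset_filter _ (Finset.subset_univ _))
      fun s _ _ => Finset.prod_nonneg fun v _ => hx.1 v
  · rintro _ ⟨y, hy, rfl⟩
    exact lagrangePoly_nonneg r E hy.1
end

section
/- Let r ≥ 2 be an integer and P = (m, 𝓔) a minimal r-pattern. If x = (x_1,…,x_m) ∈ Δ_{m−1} is a vector that maximizes λ_𝓔 over Δ_{m−1}, then x_i > 0 for every i ∈ [m]. -/
/-!
If `x i = 0`, every multiset containing `i` contributes `0` to `λ_𝓔(x)`, so restricting `x` to the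
remaining indices gives a point of the smaller simplex at which the Lagrange polynomial of `P - i`
takes the value `λ_𝓔(x) = λ(P)` (`lagrangePoly_subFamily`). Hence `λ(P - i) ≥ λ(P)`, contradicting
minimality.
-/


open Filter Topology

/-- The relabelling in `subFamily` is inverse to the inclusion `S ↪ ι` on multisets supported
in `S`. -/
lemma map_val_filterMap {ι : Type} [DecidableEq ι] (S : Finset ι) (e : Multiset ι)
    (he : ∀ i ∈ e, i ∈ S) :
    Multiset.map Subtype.val (Multiset.filterMap
      (fun i => if h : i ∈ S then some (⟨i, h⟩ : {i : ι // i ∈ S}) else none) e) = e := by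
  induction e using Multiset.induction_on with
  | empty => simp
  | cons a e ih =>
    rw [Multiset.filterMap_cons_some _ _ _ (dif_pos (he a (Multiset.mem_cons_self a e))),
      Multiset.map_cons, ih fun i hi => he i (Multiset.mem_cons_of_mem hi)]

/-- For a vector supported in `S`, multisets not contained in `S` contribute nothing, so the
Lagrange polynomials of the pattern and of its restriction to `S` agree. -/
lemma lagrangePoly_subFamily {ι : Type} [Fintype ι] [DecidableEq ι] (r : ℕ)
    (E : Finset (Multiset ι)) (S : Finset ι) (x : ι → ℝ) (hx : ∀ i ∉ S, x i = 0) :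
    lagrangePoly r (subFamily E S) (fun j => x j.1) = lagrangePoly r E x := by
  classical
  unfold lagrangePoly subFamily
  congr 1
  rw [Finset.sum_image, Finset.sum_filter]
  · refine Finset.sum_congr rfl fun e _ => ?_
    split_ifs with h
    · have hc : ∀ j : {i : ι // i ∈ S}, Multiset.count j (Multiset.filterMap
          (fun i => if h : i ∈ S then some (⟨i, h⟩ : {i : ι // i ∈ S}) else none) e)
          = Multiset.count j.1 e := by
        intro j
        conv_rhs => rw [← map_val_filterMap S e h]
        exact (Multiset.count_map_eq_count' _ _ Subtype.val_injective j).symm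
      simp only [hc]
      rw [Finset.prod_coe_sort S
        (fun i => x i ^ Multiset.count i e / ((Multiset.count i e).factorial : ℝ))]
      refine Finset.prod_subset (Finset.subset_univ S) fun i _ hi => ?_
      have : Multiset.count i e = 0 := Multiset.count_eq_zero.2 fun hie => hi (h i hie)
      simp [this]
    · push Not at h
      obtain ⟨i, hie, hiS⟩ := h
      refine (Finset.prod_eq_zero (Finset.mem_univ i) ?_).symm
      rw [hx i hiS, zero_pow (Multiset.count_ne_zero.2 hie), zero_div]
  · intro a ha b hb hab
    simp only [Finset.coe_filter, Set.mem_ofPred_eq] at ha hb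
    rw [← map_val_filterMap S a ha.2, ← map_val_filterMap S b hb.2]
    exact congrArg _ hab

lemma lagrangePoly_le_patternLagrangian {ι : Type} [Fintype ι] [DecidableEq ι] (r : ℕ)
    (E : Finset (Multiset ι)) (y : ι → ℝ) (hy : y ∈ stdSimplex ℝ ι) :
    lagrangePoly r E y ≤ patternLagrangian r E := by
  have hcont : Continuous (lagrangePoly r E) := by
    unfold lagrangePoly
    fun_prop
  exact le_csSup ((isCompact_stdSimplex ℝ ι).image hcont).bddAbove (Set.mem_image_of_mem _ hy)

/-- If `P = (m, 𝓔)` is a minimal `r`-pattern and `x ∈ Δ_{m-1}` maximizes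
`λ_𝓔`, then every coordinate of `x` is positive. -/
theorem minimal_maximizer_pos (r m : ℕ) (hr : 2 ≤ r) (hm : 0 < m)
    (E : Finset (Multiset (Fin m))) (hE : ∀ e ∈ E, Multiset.card e = r)
    (hmin : IsMinimalPattern r E)
    (x : Fin m → ℝ) (hx : x ∈ stdSimplex ℝ (Fin m))
    (hmax : ∀ y ∈ stdSimplex ℝ (Fin m), lagrangePoly r E y ≤ lagrangePoly r E x) :
    ∀ i : Fin m, 0 < x i := by
  intro i
  by_contra hi
  have hi0 : x i = 0 := le_antisymm (not_lt.1 hi) (hx.1 i)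
  have hsupp : ∀ j ∉ Finset.univ.erase i, x j = 0 := by
    intro j hj
    have : j = i := by simpa using hj
    rw [this, hi0]
  have hy : (fun j : ↥(Finset.univ.erase i) => x j.1) ∈
      stdSimplex ℝ ↥(Finset.univ.erase i) := by
    refine ⟨fun j => hx.1 j.1, ?_⟩
    refine (Finset.sum_coe_sort (Finset.univ.erase i) x).trans ?_
    rw [← hx.2]
    exact Finset.sum_subset (Finset.subset_univ _) fun j _ hj => hsupp j hj
  have h1 := lagrangePoly_le_patternLagrangian r (subFamily E (Finset.univ.erase i)) _ hy
  rw [lagrangePoly_subFamily r E _ x hsupp] at h1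
  have h2 : patternLagrangian r E ≤ lagrangePoly r E x := by
    refine csSup_le (Set.Nonempty.image _ ⟨x, hx⟩) ?_
    rintro _ ⟨y, hy, rfl⟩
    exact hmax y hy
  exact absurd (hmin i) (not_lt.2 (h2.trans h1))
end
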